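/- arXiv:2210.03185 — 3 statements merged into one kernel-verified Lean document; each statement's English description precedes it below -/
import Mathlib

section
/- Let M be a manifold without boundary and π : E → M a fiber bundle with path-connected fiber. Let Δ ⊆ B ⊆ M, where Δ and B are compact contractible subsets and the inclusions Δ ↪ M and B ↪ M are closed cofibrations, and let γ be a continuous section of π defined on a neighborhood of B. Then the inclusion Γ(E, B, γ) ↪ Γ(E, Δ, γ) is a weak homotopy equivalence. -/
/-!
The restriction map from sections over `M` fixed on `Δ` to sections over `B` fixed on `Δ` behaves
like a fibration with contractible base and fiber `Γ(E, B, γ)`.  The proof makes this explicit by a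
compression argument: every family of sections in `Γ(E, Δ, γ)` parametrised by a compact Hausdorff
`X`, lying in `Γ(E, B, γ)` over a suitable closed `A ⊆ X`, is deformed relative to `A` into
`Γ(E, B, γ)` (`exists_compression`).  Applied to cubes and their boundaries this gives the bijections
on path components and homotopy groups (`Compresses.isWeakHomotopyEquiv`).

The ingredients are the following.

* A locally trivial map has the homotopy lifting property for compact Hausdorff spaces
  (`HasTransport.homotopyLifting`).
* A closed cofibration carries neighborhood deformation data `NDRData`, in a form that is stable
  under products (`NDRData.nonempty_of_closedCofibration`, `NDRData.prod`).  Maps from the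
  subspace to a contractible space extend (`NDRData.exists_extension`).  Hence `Δ` and `B` are
  retracts of `M`, and `B` deformation retracts onto `Δ` (`NDRData.exists_le_one`).
* Lifts over a subspace that is a deformation retract extend (`NDRData.exists_lift`).

A family `s` is first connected to the constant family `γ` over `B`, by extending a lift from
`(A × I ∪ X × {0, 1}) × B ∪ X × I × Δ` to `X × I × B`.  This homotopy is then extended from
`(A × M ∪ X × B) × I ∪ X × M × {0}`.  Since `M` need not be paracompact, the second step is carried
out over a compact neighborhood of `B` and cut off there.
-/

open scoped unitInterval Topology

universe u v w

section WHE

variable {X : Type u} {Y : Type v} [TopologicalSpace X] [TopologicalSpace Y]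

/-- The map induced on path components by a continuous map. -/
noncomputable def pi0Map (f : C(X, Y)) : ZerothHomotopy X → ZerothHomotopy Y :=
  Quotient.map f (fun _ _ h => ⟨h.somePath.map f.continuous⟩)

/-- The map induced on generalized loops by a continuous map. -/
def genLoopMap {N : Type} (f : C(X, Y)) {x : X} (p : GenLoop N X x) :
    GenLoop N Y (f x) :=
  ⟨f.comp p.1, fun y hy => by
    show f (p.1 y) = f x
    rw [p.2 y hy]⟩

theorem genLoopMap_homotopic {N : Type} (f : C(X, Y)) {x : X} {p q : GenLoop N X x}
    (h : GenLoop.Homotopic p q) : GenLoop.Homotopic (genLoopMap f p) (genLoopMap f q) :=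
  h.map (fun H => H.compContinuousMap f)

/-- The map induced on `n`-th homotopy groups by a continuous map. -/
noncomputable def piMap (n : ℕ) (f : C(X, Y)) (x : X) :
    HomotopyGroup (Fin n) X x → HomotopyGroup (Fin n) Y (f x) :=
  Quotient.map (genLoopMap f) (fun _ _ h => genLoopMap_homotopic f h)

/-- A map of topological spaces is a weak homotopy equivalence if it is continuous, induces a
bijection on path components and, for every basepoint and every `n ≥ 1`, a bijection on `n`-th
homotopy groups. -/
def IsWeakHomotopyEquiv (f : X → Y) : Prop :=
  ∃ hf : Continuous f,
    Function.Bijective (pi0Map ⟨f, hf⟩) ∧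
      ∀ n : ℕ, 1 ≤ n → ∀ x : X, Function.Bijective (piMap n ⟨f, hf⟩ x)

end WHE

section Cofib

/-- The inclusion of a closed subset `A ⊆ X` is a closed cofibration if it satisfies the
homotopy extension property with respect to all spaces. -/
def ClosedCofibration {X : Type u} [TopologicalSpace X] (A : Set X) : Prop :=
  IsClosed A ∧ ∀ (Z : Type u) [TopologicalSpace Z] (f : C(X, Z))
    (h : C(A × unitInterval, Z)), (∀ a : A, h (a, 0) = f a) →
      ∃ H : C(X × unitInterval, Z), (∀ x : X, H (x, 0) = f x) ∧
        ∀ (a : A) (t : unitInterval), H (↑a, t) = h (a, t)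

end Cofib

section Bundle

variable {E M : Type u} [TopologicalSpace E] [TopologicalSpace M]

/-- `π : E → M` is a fiber bundle with fiber `F`: a continuous map which is locally on `M`
trivial with fiber `F`. -/
structure IsFiberBundle (F : Type u) [TopologicalSpace F] (π : E → M) : Prop where
  continuous : Continuous π
  locTriv : ∀ x : M, ∃ U : Set M, IsOpen U ∧ x ∈ U ∧
    ∃ e : (π ⁻¹' U) ≃ₜ (U × F), ∀ y : π ⁻¹' U, ((e y).1 : M) = π ↑y

/-- The space of continuous sections of `π : E → M`, topologized as a subspace of `C(M, E)`
with the compact-open topology. -/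
abbrev SectionSpace (π : E → M) : Type u :=
  {s : C(M, E) // ∀ x : M, π (s x) = x}

/-- The closed unit ball in `ℝ^d`. -/
def closedDisk (d : ℕ) : Set (EuclideanSpace ℝ (Fin d)) :=
  Metric.closedBall 0 1

/-- A subset `Δ ⊆ M` together with (a representative of) a germ of a continuous section of
`π` on a neighborhood of `Δ`. -/
structure GermData (π : E → M) : Type u where
  Δ : Set M
  U : Set M
  isOpen : IsOpen U
  subset : Δ ⊆ U
  sec : C(U, E)
  isSec : ∀ x : U, π (sec x) = ↑x

/-- A section has germ `g` if it agrees with the germ's section on the underlying set. -/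
def GermData.Fixes {π : E → M} (g : GermData π) (s : SectionSpace π) : Prop :=
  ∀ x (hx : x ∈ g.Δ), s.1 x = g.sec ⟨x, g.subset hx⟩

/-- The space `Γ(E, Δ_0, …, Δ_k)` of sections agreeing with the given germs `γ_i` on the
sets `Δ_i`. -/
def relSections {π : E → M} {k : ℕ} (g : Fin k → GermData π) : Set (SectionSpace π) :=
  {s | ∀ i, (g i).Fixes s}

/-- A tuple of pairs `(Δ_i, γ_i)` is disjoint if the underlying sets are pairwise disjoint. -/
def DisjTuple {π : E → M} {k : ℕ} (g : Fin k → GermData π) : Prop :=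
  ∀ i j, i ≠ j → Disjoint (g i).Δ (g j).Δ

/-- A sufficiently separated collection for the bundle `π : E → M` over a `d`-dimensional
manifold `M`. -/
structure IsSuffSep (d : ℕ) {E M : Type u} [TopologicalSpace E] [TopologicalSpace M]
    (π : E → M) (W : Set (GermData π)) : Prop where
  compact : ∀ g ∈ W, IsCompact g.Δ
  contractible : ∀ g ∈ W, ContractibleSpace g.Δ
  cofib : ∀ g ∈ W, ∃ D : Set M, Nonempty (D ≃ₜ closedDisk d) ∧ g.Δ ⊆ interior D ∧
    ClosedCofibration (X := D) (Subtype.val ⁻¹' g.Δ)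
  sep : ∀ (k : ℕ) (g : Fin k → GermData π), (∀ i, g i ∈ W) →
    ∃ g' ∈ W, ∃ D : Set M, Nonempty (D ≃ₜ closedDisk d) ∧ g'.Δ ⊆ interior D ∧
      ∀ i, Disjoint D (g i).Δ

end Bundle

section Simplex

/-- The `i`-th face inclusion `Δ^p → Δ^{p+1}` of standard topological simplices. -/
def simplexFace {p : ℕ} (i : Fin (p + 2)) (t : stdSimplex ℝ (Fin (p + 1))) :
    stdSimplex ℝ (Fin (p + 2)) :=
  ⟨i.insertNth 0 t.1, by
    constructor
    · intro x
      rcases eq_or_ne x i with rfl | hx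
      · simp
      · obtain ⟨j, rfl⟩ := Fin.exists_succAbove_eq hx
        rw [Fin.insertNth_apply_succAbove]
        exact t.2.1 j
    · rw [Fin.sum_univ_succAbove _ i]
      simp only [Fin.insertNth_apply_same, Fin.insertNth_apply_succAbove, zero_add]
      exact t.2.2⟩

end Simplex

/-- The space `Γ(E, A, γ)` of sections of `π` agreeing with the section `γ` (defined on
`U ⊇ A`) on the subset `A`. -/
def fixSet {E M : Type u} [TopologicalSpace E] [TopologicalSpace M] (π : E → M)
    {U : Set M} (γ : C(U, E)) (A : Set M) (hAU : A ⊆ U) : Set (SectionSpace π) :=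
  {s | ∀ x (hx : x ∈ A), s.1 x = γ ⟨x, hAU hx⟩}

/-! ### Homotopy lifting for locally trivial maps -/

section Lifting

variable {E : Type*} {M : Type*} [TopologicalSpace E] [TopologicalSpace M]

/-- `T` transports points of `E` lying over `V` between the fibers over `V`: `T (m, y)` lies over
`m`, depends continuously on `(m, y)`, and is `y` when `m = π y`.  Only the values on
`V ×ˢ π ⁻¹' V` matter. -/
structure IsTransport (π : E → M) (V : Set M) (T : M × E → E) : Prop where
  isOpen : IsOpen V
  continuousOn : ContinuousOn T (V ×ˢ (π ⁻¹' V))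
  proj : ∀ m ∈ V, ∀ y, π y ∈ V → π (T (m, y)) = m
  self : ∀ y, π y ∈ V → T (π y, y) = y

/-- `π` is continuous and `M` is covered by open sets over which the fibers can be transported.
This is all that is used of local triviality. -/
structure HasTransport (π : E → M) : Prop where
  continuous : Continuous π
  exists_transport : ∀ x : M, ∃ V : Set M, ∃ T : M × E → E, x ∈ V ∧ IsTransport π V T

/-- `g : Z × I → M` lifts, with initial value `f₀`, over the region below the graph of `τ`. -/
def LiftsBelow {Z : Type*} [TopologicalSpace Z] (π : E → M) (g : Z × I → M) (f₀ : Z → E)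
    (τ : Z → I) : Prop :=
  ∃ F : Z × I → E, ContinuousOn F {p | p.2 ≤ τ p.1} ∧
    (∀ p : Z × I, p.2 ≤ τ p.1 → π (F p) = g p) ∧ ∀ z, F (z, 0) = f₀ z

variable {Z : Type*} [TopologicalSpace Z] {π : E → M} {g : Z × I → M} {f₀ : Z → E}

/-- The lift is prolonged from below `τ` to below `τ'` by transporting the values on the graph
of `τ`; over the region between the graphs, `g` takes values in one transport set `V`. -/
lemma LiftsBelow.step {V : Set M} {T : M × E → E} (hT : IsTransport π V T) (hg : Continuous g)
    {τ τ' : Z → I} (hτ : Continuous τ) (hτ' : Continuous τ') (hle : ∀ z, τ z ≤ τ' z)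
    {Q : Set Z} (hQ : IsClosed Q) (hQ' : ∀ z, z ∉ Q → τ' z ≤ τ z)
    (hV : ∀ z ∈ Q, ∀ t, τ z ≤ t → t ≤ τ' z → g (z, t) ∈ V)
    (h : LiftsBelow π g f₀ τ) : LiftsBelow π g f₀ τ' := by
  classical
  obtain ⟨F, hF, hFπ, hF0⟩ := h
  let G : Z × I → E := fun p => T (g p, F (p.1, τ p.1))
  let F' : Z × I → E := fun p => if p.2 ≤ τ p.1 then F p else G p
  let R : Set (Z × I) := {p | p.1 ∈ Q ∧ τ p.1 ≤ p.2 ∧ p.2 ≤ τ' p.1}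
  have hRc : IsClosed R := by
    have h1 : IsClosed {p : Z × I | τ p.1 ≤ p.2} := isClosed_le (by fun_prop) (by fun_prop)
    have h2 : IsClosed {p : Z × I | p.2 ≤ τ' p.1} := isClosed_le (by fun_prop) (by fun_prop)
    exact (hQ.preimage continuous_fst).inter (h1.inter h2)
  have hmem : ∀ p ∈ R, g p ∈ V ∧ π (F (p.1, τ p.1)) ∈ V := by
    rintro ⟨z, t⟩ ⟨h1, h2, h3⟩
    refine ⟨hV z h1 t h2 h3, ?_⟩
    rw [hFπ (z, τ z) le_rfl]
    exact hV z h1 _ le_rfl (hle z)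
  have hG : ContinuousOn G R := by
    have hgraph : ContinuousOn (fun p : Z × I => F (p.1, τ p.1)) R :=
      hF.comp (by fun_prop) (fun p _ => le_refl (τ p.1))
    exact hT.continuousOn.comp (hg.continuousOn.prodMk hgraph) hmem
  have hGR : ∀ p ∈ R, F' p = G p := by
    rintro ⟨z, t⟩ hp
    by_cases ht : t ≤ τ z
    · have hteq : t = τ z := le_antisymm ht hp.2.1
      subst hteq
      have h1 := hFπ (z, τ z) le_rfl
      have h2 := hT.self (F (z, τ z)) (hmem _ hp).2
      rw [h1] at h2
      simp only [F', G, le_refl, if_true]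
      exact h2.symm
    · simp [F', ht]
  have hcover : {p : Z × I | p.2 ≤ τ' p.1} ⊆ {p | p.2 ≤ τ p.1} ∪ R := by
    rintro ⟨z, t⟩ hp
    by_cases ht : t ≤ τ z
    · exact Or.inl ht
    · refine Or.inr ⟨?_, (not_le.1 ht).le, hp⟩
      by_contra hz
      exact ht (le_trans hp (hQ' z hz))
  refine ⟨F', ?_, ?_, ?_⟩
  · refine ContinuousOn.mono (ContinuousOn.union_of_isClosed ?_ (hG.congr hGR) ?_ hRc) hcover
    · exact hF.congr (fun p hp => if_pos hp)
    · exact isClosed_le continuous_snd (hτ.comp continuous_fst)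
  · intro p hp
    rcases hcover hp with h1 | h1
    · have : F' p = F p := if_pos h1
      rw [this, hFπ p h1]
    · rw [hGR p h1]
      exact hT.proj _ (hmem p h1).1 _ (hmem p h1).2
  · intro z
    have : F' (z, 0) = F (z, 0) := if_pos (unitInterval.nonneg' (t := τ z))
    rw [this, hF0]

/-- Near each point the lift can be raised to the level of any bump function with small
support. -/
lemma LiftsBelow.exists_nhds (hπ : HasTransport π) (hg : Continuous g) (z₀ : Z) :
    ∃ V ∈ 𝓝 z₀, ∀ (Q : Set Z) (ψ τ : Z → I), IsClosed Q → Q ⊆ V → Continuous ψ →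
      Continuous τ → (∀ z, z ∉ Q → ψ z = 0) → LiftsBelow π g f₀ τ →
        LiftsBelow π g f₀ (fun z => max (τ z) (ψ z)) := by
  choose W T hxW hT using hπ.exists_transport
  obtain ⟨t, ht0, htm, ⟨n, hn⟩, htc⟩ := exists_monotone_Icc_subset_open_cover_unitInterval
    (c := fun x : M => (fun s : I => g (z₀, s)) ⁻¹' W x)
    (fun x => (hT x).isOpen.preimage (by fun_prop))
    (fun s _ => Set.mem_iUnion.2 ⟨g (z₀, s), hxW _⟩)
  choose c hc using htc
  refine ⟨{z | ∀ i ∈ Finset.range n, ∀ s ∈ Set.Icc (t i) (t (i + 1)), g (z, s) ∈ W (c i)}, ?_, ?_⟩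
  · refine (Filter.eventually_all_finset _).2 fun i _ => ?_
    refine isCompact_Icc.eventually_forall_of_forall_eventually fun s hs => ?_
    exact hg.continuousAt.eventually ((hT (c i)).isOpen.mem_nhds (hc i hs))
  intro Q ψ τ hQ hQV hψ hτ hψQ hl
  have key : ∀ i ≤ n, LiftsBelow π g f₀ (fun z => max (τ z) (min (ψ z) (t i))) := by
    intro i
    induction i with
    | zero =>
      intro _
      have : (fun z => max (τ z) (min (ψ z) (t 0))) = τ := by
        funext z
        rw [ht0, min_eq_right unitInterval.nonneg', max_eq_left unitInterval.nonneg']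
      rwa [this]
    | succ i ih =>
      intro hi
      refine LiftsBelow.step (hT (c i)) hg (by fun_prop) (by fun_prop) ?_
        (Q := Q ∩ ({z | t i ≤ ψ z} ∩ {z | τ z ≤ t (i + 1)})) ?_ ?_ ?_ (ih (by omega))
      · intro z
        exact max_le_max le_rfl (min_le_min le_rfl (htm (Nat.le_succ i)))
      · exact hQ.inter ((isClosed_le continuous_const hψ).inter (isClosed_le hτ continuous_const))
      · intro z hz
        by_cases h1 : z ∈ Q
        · by_cases h2 : t i ≤ ψ z
          · have h3 : t (i + 1) < τ z := by
              by_contra h3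
              exact hz ⟨h1, h2, not_lt.1 h3⟩
            exact max_le (le_max_left _ _)
              (le_trans (min_le_right _ _) (le_trans h3.le (le_max_left _ _)))
          · rw [min_eq_left (not_le.1 h2).le]
            exact max_le_max le_rfl (min_le_left _ _)
        · rw [hψQ z h1]
          exact max_le (le_max_left _ _)
            (le_trans (min_le_left _ _) (unitInterval.nonneg'))
      · rintro z ⟨h1, h2, h3⟩ s hs1 hs2
        refine hQV h1 i (Finset.mem_range.2 (by omega)) s ⟨?_, ?_⟩
        · exact le_trans (le_trans (le_min h2 le_rfl) (le_max_right _ _)) hs1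
        · exact le_trans hs2 (max_le h3 (min_le_right _ _))
  have := key n le_rfl
  rw [hn n le_rfl] at this
  simpa only [min_eq_left unitInterval.le_one'] using this

/-- Homotopy lifting property over compact Hausdorff spaces.  Starting from the trivial lift
over `Z × {0}`, finitely many bump functions whose maximum is `1` raise the level to `1`. -/
theorem HasTransport.homotopyLifting [CompactSpace Z] [T2Space Z] (hπ : HasTransport π)
    (hg : Continuous g) (hf₀ : Continuous f₀) (h0 : ∀ z, π (f₀ z) = g (z, 0)) :
    ∃ F : Z × I → E, Continuous F ∧ (∀ p, π (F p) = g p) ∧ ∀ z, F (z, 0) = f₀ z := by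
  have main : ∀ τ : Z → I, Continuous τ → LiftsBelow π g f₀ τ →
      ∃ τ' : Z → I, Continuous τ' ∧ (∀ z, τ z ≤ τ' z) ∧ (∀ z ∈ Set.univ, τ' z = 1) ∧
        LiftsBelow π g f₀ τ' := by
    refine isCompact_univ.induction_on (p := fun S => ∀ τ : Z → I, Continuous τ →
      LiftsBelow π g f₀ τ → ∃ τ' : Z → I, Continuous τ' ∧ (∀ z, τ z ≤ τ' z) ∧
        (∀ z ∈ S, τ' z = 1) ∧ LiftsBelow π g f₀ τ') ?_ ?_ ?_ ?_
    · exact fun τ hτ hl => ⟨τ, hτ, fun _ => le_rfl, by simp, hl⟩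
    · intro s t hst ht τ hτ hl
      obtain ⟨τ', h1, h2, h3, h4⟩ := ht τ hτ hl
      exact ⟨τ', h1, h2, fun z hz => h3 z (hst hz), h4⟩
    · intro s t hs ht τ hτ hl
      obtain ⟨τ₁, h1, h2, h3, h4⟩ := hs τ hτ hl
      obtain ⟨τ₂, k1, k2, k3, k4⟩ := ht τ₁ h1 h4
      refine ⟨τ₂, k1, fun z => (h2 z).trans (k2 z), ?_, k4⟩
      rintro z (hz | hz)
      · exact le_antisymm unitInterval.le_one' (by rw [← h3 z hz]; exact k2 z)
      · exact k3 z hz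
    · intro z₀ _
      obtain ⟨V, hV, hVl⟩ := LiftsBelow.exists_nhds (f₀ := f₀) hπ hg z₀
      obtain ⟨Q, hQ, hQc, hQV⟩ := exists_mem_nhds_isClosed_subset hV
      obtain ⟨Q', hQ', hQc', hQQ'⟩ := exists_mem_nhds_isClosed_subset (interior_mem_nhds.2 hQ)
      obtain ⟨ψ, hψ0, hψ1, hψI⟩ := exists_continuous_zero_one_of_isClosed
        (isOpen_interior (s := Q)).isClosed_compl hQc'
        (Set.disjoint_left.2 fun z hz hz' => hz (hQQ' hz'))
      refine ⟨Q', mem_nhdsWithin_of_mem_nhds hQ', fun τ hτ hl => ?_⟩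
      have hψc : Continuous (fun z => (⟨ψ z, hψI z⟩ : I)) := ψ.continuous.subtype_mk _
      refine ⟨fun z => max (τ z) ⟨ψ z, hψI z⟩, hτ.max hψc, fun z => le_max_left _ _, ?_,
        hVl Q _ τ hQc hQV hψc hτ (fun z hz => Subtype.ext ?_) hl⟩
      · intro z hz
        refine le_antisymm unitInterval.le_one' (le_trans ?_ (le_max_right _ _))
        exact (Subtype.coe_le_coe).1 (hψ1 hz).ge
      · exact hψ0 (fun h => hz (interior_subset h))
  obtain ⟨τ, _, -, hτ1, F, hF, hFπ, hF0⟩ := main (fun _ => 0) continuous_const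
    ⟨fun p => f₀ p.1, by fun_prop, by
      rintro ⟨z, t⟩ ht
      have : t = 0 := le_antisymm ht unitInterval.nonneg'
      subst this
      exact h0 z, fun _ => rfl⟩
  have hall : ∀ p : Z × I, p.2 ≤ τ p.1 := fun p => by
    rw [hτ1 _ trivial]; exact unitInterval.le_one'
  refine ⟨F, ?_, fun p => hFπ p (hall p), hF0⟩
  rw [← continuousOn_univ]
  exact hF.mono fun p _ => hall p

end Lifting

/-! ### Neighborhood deformation data -/

/-- Time-reparametrised neighborhood deformation retraction data for `C ⊆ Z`: a motion `D` of `Z`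
starting at the identity and a continuous time `φ`, vanishing on `C`, such that each `z` with
`φ z ≤ 1` is in `C` at time `φ z`.  If moreover `φ ≤ 1` everywhere, `C` is a deformation retract
of `Z`.  Letting the motion stop at a point-dependent time makes products a matter of taking
the minimum of the times, without any division. -/
structure NDRData {Z : Type*} [TopologicalSpace Z] (C : Set Z) where
  /-- the time at which points close to `C` have reached `C` -/
  φ : Z → ℝ
  /-- the motion; only times `≥ 0` matter -/
  D : Z × ℝ → Z
  continuous_φ : Continuous φ
  continuous_D : Continuous D
  φ_nonneg : ∀ z, 0 ≤ φ z
  φ_zero : ∀ z ∈ C, φ z = 0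
  D_zero : ∀ z, D (z, 0) = z
  D_mem : ∀ z, φ z ≤ 1 → D (z, φ z) ∈ C

namespace NDRData

section Basic

variable {Z : Type*} [TopologicalSpace Z] {C : Set Z}

lemma isClosed (fl : NDRData C) : IsClosed C := by
  have : C = fl.φ ⁻¹' {0} := by
    ext z
    refine ⟨fun h => fl.φ_zero z h, fun h => ?_⟩
    have h0 : fl.φ z = 0 := h
    have := fl.D_mem z (by rw [h0]; exact zero_le_one)
    rwa [h0, fl.D_zero] at this
  rw [this]
  exact isClosed_singleton.preimage fl.continuous_φ

/-- The product of two pairs `(Z, C)` and `(Z', C')` is `(Z × Z', C × Z' ∪ Z × C')`: both factors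
move until the first one arrives. -/
def prod {Z' : Type*} [TopologicalSpace Z'] {C' : Set Z'} (fl : NDRData C) (fl' : NDRData C') :
    NDRData {p : Z × Z' | p.1 ∈ C ∨ p.2 ∈ C'} where
  φ p := min (fl.φ p.1) (fl'.φ p.2)
  D q := (fl.D (q.1.1, q.2), fl'.D (q.1.2, q.2))
  continuous_φ := (fl.continuous_φ.comp continuous_fst).min (fl'.continuous_φ.comp continuous_snd)
  continuous_D := (fl.continuous_D.comp (by fun_prop)).prodMk (fl'.continuous_D.comp (by fun_prop))
  φ_nonneg p := le_min (fl.φ_nonneg _) (fl'.φ_nonneg _)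
  φ_zero := by
    rintro p (h | h)
    · rw [fl.φ_zero _ h, min_eq_left (fl'.φ_nonneg _)]
    · rw [fl'.φ_zero _ h, min_eq_right (fl.φ_nonneg _)]
  D_zero p := by simp only [fl.D_zero, fl'.D_zero]
  D_mem p hp := by
    rcases le_total (fl.φ p.1) (fl'.φ p.2) with h | h
    · rw [min_eq_left h] at hp ⊢
      exact Or.inl (fl.D_mem _ hp)
    · rw [min_eq_right h] at hp ⊢
      exact Or.inr (fl'.D_mem _ hp)

/-- A map from `C` to a contractible space extends to `Z`: near `C` move into `C`, apply the
map and contract by an amount growing with the distance from `C`. -/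
lemma exists_extension (fl : NDRData C) {Y : Type*} [TopologicalSpace Y] [ContractibleSpace Y]
    {f : Z → Y} (hf : ContinuousOn f C) :
    ∃ f' : Z → Y, Continuous f' ∧ ∀ z ∈ C, f' z = f z := by
  obtain ⟨y₀, ⟨K⟩⟩ := id_nullhomotopic Y
  refine ⟨fun z => if fl.φ z ≤ 1 then
    K (Set.projIcc 0 1 zero_le_one (fl.φ z), f (fl.D (z, fl.φ z))) else y₀, ?_, ?_⟩
  · refine continuous_if_le fl.continuous_φ continuous_const ?_ continuousOn_const ?_
    · refine K.continuous.comp_continuousOn (ContinuousOn.prodMk ?_ ?_)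
      · exact (continuous_projIcc.comp fl.continuous_φ).continuousOn
      · exact hf.comp (fl.continuous_D.comp
          (continuous_id.prodMk fl.continuous_φ)).continuousOn (fun z hz => fl.D_mem z hz)
    · intro z hz
      rw [hz, Set.projIcc_right]
      exact K.apply_one _
  · intro z hz
    simp only [fl.φ_zero z hz, zero_le_one, if_true, Set.projIcc_left, fl.D_zero]
    exact K.apply_zero _

/-- Restriction of the data to a subset `B ⊇ C` that is a retract of `Z`. -/
def restrict (fl : NDRData C) {B : Set Z} (hCB : C ⊆ B) (ρ : Z → B) (hρ : Continuous ρ)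
    (hρB : ∀ b : B, ρ b = b) : NDRData {b : B | (b : Z) ∈ C} where
  φ b := fl.φ b
  D p := ρ (fl.D (p.1, p.2))
  continuous_φ := fl.continuous_φ.comp continuous_subtype_val
  continuous_D := hρ.comp (fl.continuous_D.comp (by fun_prop))
  φ_nonneg b := fl.φ_nonneg _
  φ_zero b hb := fl.φ_zero _ hb
  D_zero b := by simp only [fl.D_zero, hρB]
  D_mem b hb := by
    have h := fl.D_mem _ hb
    have h' := hρB ⟨_, hCB h⟩
    simp only [Set.mem_ofPred_eq]
    rw [h']
    exact h

/-- Data for a closed cofibration, from the retraction of `Z × I` onto `Z × {0} ∪ C × I`.  Its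
first component is the motion, and the time is the largest displacement of the second
component along `{z} × I`; the factor `2` turns the strict bound `< 1` into `≤ 1`. -/
lemma nonempty_of_closedCofibration {Z : Type u} [TopologicalSpace Z] {C : Set Z}
    (h : ClosedCofibration C) : Nonempty (NDRData C) := by
  obtain ⟨hC, hext⟩ := h
  obtain ⟨H, H0, HC⟩ := hext {p : Z × I // p.2 = 0 ∨ p.1 ∈ C}
    ⟨fun z => ⟨(z, 0), Or.inl rfl⟩, by fun_prop⟩
    ⟨fun p => ⟨(p.1, p.2), Or.inr p.1.2⟩, by fun_prop⟩ (fun _ => rfl)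
  have hd : Continuous (fun p : Z × I => (p.2 : ℝ) - ((H p).1.2 : ℝ)) := by fun_prop
  let d : C(Z, C(I, ℝ)) := ContinuousMap.curry ⟨_, hd⟩
  have hdz : ∀ z t, d z t = (t : ℝ) - ((H (z, t)).1.2 : ℝ) := fun _ _ => rfl
  refine ⟨⟨fun z => 2 * ‖d z‖,
    fun p => (H (p.1, Set.projIcc 0 1 zero_le_one (p.2 / 2))).1.1, ?_, ?_, ?_, ?_, ?_, ?_⟩⟩
  · exact continuous_const.mul (continuous_norm.comp d.continuous)
  · have : Continuous (fun p : Z × ℝ => (p.1, Set.projIcc (0 : ℝ) 1 zero_le_one (p.2 / 2))) :=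
      continuous_fst.prodMk (continuous_projIcc.comp (by fun_prop))
    exact continuous_fst.comp (continuous_subtype_val.comp (H.continuous.comp this))
  · intro z; positivity
  · intro z hz
    have : d z = 0 := by
      ext t
      rw [hdz, HC ⟨z, hz⟩ t]
      simp
    simp [this]
  · intro z
    simp only [zero_div, Set.projIcc_left]
    exact congrArg (fun w => w.1.1) (H0 z)
  · intro z hz
    have hz2 : ‖d z‖ ≤ 1 / 2 := by linarith
    set s : ℝ := ‖d z‖ with hs
    have hs0 : 0 ≤ s := norm_nonneg _
    -- At all times later than `s` the second component is positive, so the first lies in `C`.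
    have hlate : ∀ t : ℝ, s < t → t < 1 →
        (H (z, Set.projIcc 0 1 zero_le_one t)).1.1 ∈ C := by
      intro t ht ht1
      have htI : t ∈ Set.Icc (0 : ℝ) 1 := ⟨by linarith, ht1.le⟩
      rw [Set.projIcc_of_mem zero_le_one htI]
      refine (H (z, ⟨t, htI⟩)).2.resolve_left fun h0 => ?_
      have h1 := (d z).norm_coe_le_norm ⟨t, htI⟩
      rw [hdz, h0] at h1
      simp only [Set.Icc.coe_zero, sub_zero, Real.norm_eq_abs] at h1
      rw [abs_of_nonneg htI.1] at h1
      linarith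
    have hcont : Continuous (fun t : ℝ => (H (z, Set.projIcc 0 1 zero_le_one t)).1.1) :=
      continuous_fst.comp (continuous_subtype_val.comp (H.continuous.comp
        (continuous_const.prodMk continuous_projIcc)))
    have hlim := hC.mem_of_tendsto (b := 𝓝[>] s)
      ((hcont.tendsto s).mono_left nhdsWithin_le_nhds) (by
        filter_upwards [Ioo_mem_nhdsGT (show s < 1 by linarith)] with t ht
        exact hlate t ht.1 ht.2)
    have : 2 * s / 2 = s := by ring
    rw [this]
    exact hlim

end Basic

/-! ### Cubes -/

/-- The radial motion of the unit interval away from `1 / 2`. -/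
noncomputable def radial (t s : ℝ) : I := Set.projIcc 0 1 zero_le_one (t + s * (2 * t - 1))

lemma continuous_radial : Continuous (fun p : ℝ × ℝ => radial p.1 p.2) :=
  continuous_projIcc.comp (by fun_prop)

lemma radial_zero (t : I) : radial t 0 = t := by simp [radial]

lemma radial_eq (t s : ℝ) (ht : 0 ≤ t) (ht1 : t ≤ 1) (hs : s = 3 / 2 * (1 - |2 * t - 1|))
    (h : s ≤ 1) : radial t s = 0 ∨ radial t s = 1 := by
  rcases le_total (2 * t - 1) 0 with h1 | h1
  · left
    rw [abs_of_nonpos h1] at hs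
    exact Set.projIcc_of_le_left _ (by nlinarith)
  · right
    rw [abs_of_nonneg h1] at hs
    exact Set.projIcc_of_right_le _ (by nlinarith)

/-- The pair `(I, {0, 1})`. -/
noncomputable def interval : NDRData {t : I | t = 0 ∨ t = 1} where
  φ t := 3 / 2 * (1 - |2 * (t : ℝ) - 1|)
  D p := radial p.1 p.2
  continuous_φ := by fun_prop
  continuous_D := continuous_radial.comp
    (show Continuous fun p : I × ℝ => ((p.1 : ℝ), p.2) by fun_prop)
  φ_nonneg t := by
    have : |2 * (t : ℝ) - 1| ≤ 1 := abs_le.2 ⟨by linarith [t.2.1], by linarith [t.2.2]⟩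
    linarith
  φ_zero := by
    rintro t (rfl | rfl) <;> norm_num
  D_zero t := radial_zero t
  D_mem t ht := radial_eq _ _ t.2.1 t.2.2 rfl ht

/-- The pair `(I, {0})`; its time is at most `1`. -/
noncomputable def intervalZero : NDRData {t : I | t = 0} where
  φ t := t
  D p := Set.projIcc 0 1 zero_le_one ((p.1 : ℝ) - p.2)
  continuous_φ := by fun_prop
  continuous_D := continuous_projIcc.comp (by fun_prop)
  φ_nonneg t := t.2.1
  φ_zero := by rintro t rfl; rfl
  D_zero t := by simp
  D_mem t ht := by simp [Set.projIcc_left]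

/-- The cube and its boundary.  The sup norm of `2 x - 1` is `1` exactly on the boundary; for the
cube of dimension zero the time is the constant `3 / 2 > 1`. -/
noncomputable def cube (N : Type*) [Fintype N] : NDRData (Cube.boundary N) where
  φ x := 3 / 2 * (1 - ‖fun i => 2 * (x i : ℝ) - 1‖)
  D p := fun i => radial (p.1 i) p.2
  continuous_φ := by fun_prop
  continuous_D := continuous_pi fun i => continuous_radial.comp
    (show Continuous fun p : (N → I) × ℝ => ((p.1 i : ℝ), p.2) by fun_prop)
  φ_nonneg x := by
    have : ‖fun i => 2 * (x i : ℝ) - 1‖ ≤ 1 := (pi_norm_le_iff_of_nonneg zero_le_one).2 fun i =>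
      abs_le.2 ⟨by linarith [(x i).2.1], by linarith [(x i).2.2]⟩
    linarith
  φ_zero := by
    rintro x ⟨i, hi⟩
    have h1 : ‖fun i => 2 * (x i : ℝ) - 1‖ ≤ 1 := (pi_norm_le_iff_of_nonneg zero_le_one).2 fun i =>
      abs_le.2 ⟨by linarith [(x i).2.1], by linarith [(x i).2.2]⟩
    have h2 := norm_le_pi_norm (fun i => 2 * (x i : ℝ) - 1) i
    have h3 : ‖2 * (x i : ℝ) - 1‖ = 1 := by
      rcases hi with hi | hi <;> rw [hi] <;> norm_num
    rw [h3] at h2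
    rw [le_antisymm h1 h2]
    norm_num
  D_zero x := by
    funext i
    exact radial_zero _
  D_mem x hx := by
    have hpos : 0 < ‖fun i => 2 * (x i : ℝ) - 1‖ := by linarith
    obtain ⟨i, hi⟩ : ∃ i, |2 * (x i : ℝ) - 1| = ‖fun i => 2 * (x i : ℝ) - 1‖ := by
      by_contra! hne
      have := (pi_norm_lt_iff hpos).2 fun i =>
        lt_of_le_of_ne (norm_le_pi_norm (fun i => 2 * (x i : ℝ) - 1) i) (hne i)
      exact lt_irrefl _ this
    exact ⟨i, radial_eq _ _ (x i).2.1 (x i).2.2 (by rw [hi]) hx⟩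

end NDRData

/-! ### Deformation retracts and relative lifting -/

namespace NDRData

variable {Z : Type*} [TopologicalSpace Z] {C : Set Z}

lemma exists_retraction (fl : NDRData C) [ContractibleSpace C] :
    ∃ ρ : Z → C, Continuous ρ ∧ ∀ c : C, ρ c = c := by
  classical
  obtain ⟨c₀⟩ : Nonempty C := inferInstance
  obtain ⟨ρ, hρ, hρC⟩ := fl.exists_extension
    (f := fun z => if h : z ∈ C then (⟨z, h⟩ : C) else c₀) (by
      rw [continuousOn_iff_continuous_domRestrict]
      refine continuous_id.congr fun c => ?_
      simp)
  refine ⟨ρ, hρ, fun c => ?_⟩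
  rw [hρC c c.2, dif_pos c.2]

/-- If `Z` is contractible and retracts onto `C` by `r`, it deformation retracts onto `C`: the map
given by `id` on `Z × {0}`, by `r` on `Z × {1}` and by the projection on `C × I` extends to
`Z × I`.  The new motion follows the old one and then this homotopy, which fixes `C`. -/
lemma exists_le_one (fl : NDRData C) [ContractibleSpace Z] (r : Z → Z) (hr : Continuous r)
    (hrC : ∀ z, r z ∈ C) (hrid : ∀ z ∈ C, r z = z) :
    ∃ fl' : NDRData C, ∀ z, fl'.φ z ≤ 1 := by
  classical
  obtain ⟨K, hK, hKC⟩ := (fl.prod interval).exists_extension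
    (f := fun p : Z × I => if (p.2 : ℝ) ≤ 1 / 2 then p.1 else r p.1) (by
      rw [continuousOn_iff_continuous_domRestrict]
      refine Continuous.if_le (f := fun p : {p : Z × I | p.1 ∈ C ∨ p.2 ∈ {t : I | t = 0 ∨ t = 1}} =>
        ((p.1.2 : I) : ℝ)) (g := fun _ => 1 / 2) (by fun_prop) (by fun_prop) (by fun_prop)
        (by fun_prop) ?_
      rintro ⟨⟨z, t⟩, h | h | h⟩ ht
      · exact (hrid z h).symm
      · simp only at h ht
        rw [h] at ht; norm_num at ht
      · simp only at h ht
        rw [h] at ht; norm_num at ht)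
  have hK0 : ∀ z, K (z, 0) = z := fun z => by
    rw [hKC (z, 0) (Or.inr (Or.inl rfl))]; norm_num
  have hK1 : ∀ z, K (z, 1) = r z := fun z => by
    rw [hKC (z, 1) (Or.inr (Or.inr rfl))]; norm_num
  have hKid : ∀ z ∈ C, ∀ t, K (z, t) = z := fun z hz t => by
    rw [hKC (z, t) (Or.inl hz)]; simp [hrid z hz]
  have hφc := fl.continuous_φ
  have hφ0 : ∀ z, 0 ≤ min (fl.φ z) 1 := fun z => le_min (fl.φ_nonneg z) zero_le_one
  refine ⟨⟨fun z => min (fl.φ z) 1, fun p => K (fl.D (p.1, min (2 * p.2) (min (fl.φ p.1) 1)),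
    Set.projIcc 0 1 zero_le_one (2 * p.2 - min (fl.φ p.1) 1)), by fun_prop, ?_, hφ0, ?_, ?_, ?_⟩,
    fun z => min_le_right _ _⟩
  · refine hK.comp (Continuous.prodMk (fl.continuous_D.comp ?_) (continuous_projIcc.comp ?_)) <;>
    fun_prop
  · intro z hz
    rw [fl.φ_zero z hz]; norm_num
  · intro z
    have h1 : min (2 * 0) (min (fl.φ z) 1) = 0 := by rw [mul_zero, min_eq_left (hφ0 z)]
    have h2 : Set.projIcc (0 : ℝ) 1 zero_le_one (2 * 0 - min (fl.φ z) 1) = 0 :=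
      Set.projIcc_of_le_left _ (by linarith [hφ0 z])
    simp only [h1, h2, fl.D_zero, hK0]
  · intro z _
    have h1 : min (2 * min (fl.φ z) 1) (min (fl.φ z) 1) = min (fl.φ z) 1 :=
      min_eq_right (by linarith [hφ0 z])
    have h2 : 2 * min (fl.φ z) 1 - min (fl.φ z) 1 = min (fl.φ z) 1 := by ring
    simp only [h1, h2]
    rcases le_total (fl.φ z) 1 with h | h
    · rw [min_eq_left h]
      have := fl.D_mem z h
      rwa [hKid _ this]
    · rw [min_eq_right h, Set.projIcc_right]
      have : K (fl.D (z, 1), 1) ∈ C := by rw [hK1]; exact hrC _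
      exact this

/-- Relative lifting (after Strøm): if `C` is a deformation retract of `Z`, then a lift of
`g : Z → M` over `C` extends to a lift of `g ∘ j` for every map `j` from a compact Hausdorff
space.  The motion is run backwards from `C` for exactly the time `φ`, so nothing changes
over `C`, where `φ = 0`. -/
lemma exists_lift (fl : NDRData C) (hfl : ∀ z, fl.φ z ≤ 1)
    {E M Y : Type*} [TopologicalSpace E] [TopologicalSpace M] [TopologicalSpace Y]
    [CompactSpace Y] [T2Space Y] {π : E → M} (hπ : HasTransport π)
    {j : Y → Z} (hj : Continuous j) {g : Z → M} (hg : Continuous g)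
    {f : Z → E} (hf : ContinuousOn f C) (hfg : ∀ z ∈ C, π (f z) = g z) :
    ∃ F : Y → E, Continuous F ∧ (∀ y, π (F y) = g (j y)) ∧ ∀ y, j y ∈ C → F y = f (j y) := by
  have hφ : Continuous fun y => fl.φ (j y) := fl.continuous_φ.comp hj
  have hG : Continuous fun p : Y × I => g (fl.D (j p.1, max (fl.φ (j p.1) - p.2) 0)) :=
    hg.comp (fl.continuous_D.comp ((hj.comp continuous_fst).prodMk
      (((hφ.comp continuous_fst).sub (by fun_prop)).max continuous_const)))
  obtain ⟨F, hF, hFπ, hF0⟩ := hπ.homotopyLifting (f₀ := fun y => f (fl.D (j y, fl.φ (j y)))) hG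
    (hf.comp_continuous (fl.continuous_D.comp (hj.prodMk hφ)) fun y => fl.D_mem _ (hfl _))
    (fun y => by
      rw [hfg _ (fl.D_mem _ (hfl _))]
      simp [max_eq_left (fl.φ_nonneg (j y))])
  refine ⟨fun y => F (y, ⟨fl.φ (j y), fl.φ_nonneg _, hfl _⟩), ?_, ?_, ?_⟩
  · exact hF.comp (continuous_id.prodMk (hφ.subtype_mk _))
  · intro y
    rw [hFπ]
    simp [fl.D_zero]
  · intro y hy
    have h0 := fl.φ_zero _ hy
    have h1 : (⟨fl.φ (j y), fl.φ_nonneg _, hfl _⟩ : I) = 0 := Subtype.ext h0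
    have h2 := hF0 y
    rw [h0, fl.D_zero] at h2
    exact (congrArg (fun t : I => F (y, t)) h1).trans h2

end NDRData

/-! ### Compressing families of sections -/

/-- A family `s` of sections over `X` which agrees with `γ` on `Δ`, and on all of `B` for
parameters in `A`, is deformed relative to `A` and `Δ` into a family agreeing with `γ` on `B`.
The deformation is constructed over `B`, where it exists because `B` deformation retracts onto
`Δ`; it is then extended over a compact neighborhood `L` of `B`, and finally slowed down to a
standstill towards the frontier of `L`. -/
lemma exists_compression {E M X : Type*} [TopologicalSpace E] [TopologicalSpace M]
    [TopologicalSpace X] [LocallyCompactSpace M] [T2Space M] [CompactSpace X] [T2Space X]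
    {π : E → M} (hπ : HasTransport π) {A : Set X} (flA : NDRData A)
    {Δ B : Set M} (hΔB : Δ ⊆ B) (hB : IsCompact B) [ContractibleSpace Δ] [ContractibleSpace B]
    (flΔ : NDRData Δ) (flB : NDRData B)
    {γ : B → E} (hγ : Continuous γ) (hγπ : ∀ b, π (γ b) = b)
    {s : X × M → E} (hs : Continuous s) (hsπ : ∀ p, π (s p) = p.2)
    (hsΔ : ∀ x, ∀ b : B, (b : M) ∈ Δ → s (x, b) = γ b)
    (hsA : ∀ x ∈ A, ∀ b : B, s (x, b) = γ b) :
    ∃ S : (I × X) × M → E, Continuous S ∧ (∀ p, π (S p) = p.2) ∧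
      (∀ x m, S ((0, x), m) = s (x, m)) ∧
      (∀ t x, ∀ b : B, (b : M) ∈ Δ → S ((t, x), b) = γ b) ∧
      (∀ t, ∀ x ∈ A, ∀ m, S ((t, x), m) = s (x, m)) ∧
      ∀ x, ∀ b : B, S ((1, x), b) = γ b := by
  classical
  have : CompactSpace B := isCompact_iff_compactSpace.1 hB
  obtain ⟨ρ, hρ, hρB⟩ := flB.exists_retraction
  obtain ⟨r, hr, hrΔ⟩ := flΔ.exists_retraction
  obtain ⟨flBΔ, hflBΔ⟩ := (flΔ.restrict hΔB ρ hρ hρB).exists_le_one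
    (fun b => ⟨r b, hΔB (r b).2⟩) (by fun_prop) (fun b => (r b).2)
    (fun b hb => by
      have h := hrΔ ⟨b, hb⟩
      exact Subtype.ext (congrArg (fun d : Δ => (d : M)) h))
  -- The deformation `η` over `B`.
  obtain ⟨η, hη, hηπ, hηC⟩ := ((flA.prod NDRData.interval).prod flBΔ).exists_lift
    (fun z => (min_le_right _ _).trans (hflBΔ _)) hπ continuous_id
    (g := fun p : (X × I) × B => (p.2 : M)) (by fun_prop)
    (f := fun p => if (p.1.2 : ℝ) ≤ 1 / 2 then s (p.1.1, p.2) else γ p.2) (by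
      rw [continuousOn_iff_continuous_domRestrict]
      refine Continuous.if_le (f := fun p : {p : (X × I) × B |
          p.1 ∈ {q : X × I | q.1 ∈ A ∨ q.2 ∈ {t : I | t = 0 ∨ t = 1}} ∨
          p.2 ∈ {b : B | (b : M) ∈ Δ}} =>
        ((p.1.1.2 : I) : ℝ)) (g := fun _ => 1 / 2) (by fun_prop) (by fun_prop) (by fun_prop)
        (by fun_prop) ?_
      rintro ⟨⟨⟨x, t⟩, b⟩, (h | h | h) | h⟩ ht
      · exact hsA x h b
      · simp only at h ht
        rw [h] at ht; norm_num at ht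
      · simp only at h ht
        rw [h] at ht; norm_num at ht
      · exact hsΔ x b h) (by
      rintro ⟨⟨x, t⟩, b⟩ _
      split_ifs
      · exact hsπ _
      · exact hγπ _)
  have hη0 : ∀ x b, η ((x, 0), b) = s (x, b) := fun x b => by
    rw [hηC ((x, 0), b) (Or.inl (Or.inr (Or.inl rfl)))]; norm_num
  have hη1 : ∀ x b, η ((x, 1), b) = γ b := fun x b => by
    rw [hηC ((x, 1), b) (Or.inl (Or.inr (Or.inr rfl)))]; norm_num
  have hηA : ∀ x ∈ A, ∀ t b, η ((x, t), b) = s (x, b) := fun x hx t b => by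
    rw [hηC ((x, t), b) (Or.inl (Or.inl hx))]; simp [hsA x hx b]
  have hηΔ : ∀ x t, ∀ b : B, (b : M) ∈ Δ → η ((x, t), b) = γ b := fun x t b hb => by
    rw [hηC ((x, t), b) (Or.inr hb)]; simp [hsΔ x b hb]
  -- Extension of `η` over the compact neighborhood `L`.
  obtain ⟨L, hL, hBL⟩ := exists_compact_superset hB
  have : CompactSpace L := isCompact_iff_compactSpace.1 hL
  let f₂ : (X × M) × I → E := fun p =>
    if p.1.2 ∈ B then η ((p.1.1, p.2), ρ p.1.2) else s p.1
  have hf₂B : ∀ x t, ∀ b : B, f₂ ((x, b), t) = η ((x, t), b) := fun x t b => by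
    simp only [f₂, b.2, if_true, hρB]
  have hf₂s : ∀ x m t, x ∈ A ∨ t = 0 → f₂ ((x, m), t) = s (x, m) := by
    intro x m t h
    by_cases hm : m ∈ B
    · refine (hf₂B x t ⟨m, hm⟩).trans ?_
      rcases h with h | rfl
      · exact hηA x h _ _
      · exact hη0 _ _
    · simp only [f₂, hm, if_false]
  have hf₂c : ContinuousOn f₂ ({p : (X × M) × I | p.1.2 ∈ B} ∪
      {p : (X × M) × I | p.1.1 ∈ A ∨ p.2 = 0}) := by
    refine ContinuousOn.union_of_isClosed ?_ ?_ ?_ ?_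
    · refine ContinuousOn.congr (f := fun p : (X × M) × I => η ((p.1.1, p.2), ρ p.1.2)) ?_ ?_
      · exact Continuous.continuousOn (by fun_prop)
      · exact fun p hp => if_pos hp
    · refine ContinuousOn.congr (f := fun p : (X × M) × I => s p.1) ?_ ?_
      · exact Continuous.continuousOn (by fun_prop)
      · exact fun p hp => hf₂s _ _ _ hp
    · exact hB.isClosed.preimage (by fun_prop : Continuous fun p : (X × M) × I => p.1.2)
    · exact (flA.isClosed.preimage (by fun_prop : Continuous fun p : (X × M) × I => p.1.1)).union
        (isClosed_singleton.preimage continuous_snd)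
  obtain ⟨S₂, hS₂, hS₂π, hS₂C⟩ := ((flA.prod flB).prod NDRData.intervalZero).exists_lift
    (fun z => (min_le_right _ _).trans z.2.2.2) hπ
    (j := fun p : (X × L) × I => ((p.1.1, (p.1.2 : M)), p.2)) (by fun_prop)
    (g := fun p : (X × M) × I => p.1.2) (by fun_prop) (f := f₂)
    (hf₂c.mono (by
      rintro p ((h | h) | h)
      · exact Or.inr (Or.inl h)
      · exact Or.inl h
      · exact Or.inr (Or.inr h))) (by
      rintro ⟨⟨x, m⟩, t⟩ _
      by_cases hm : m ∈ B
      · rw [hf₂B x t ⟨m, hm⟩]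
        exact hηπ _
      · simp only [f₂, hm, if_false]
        exact hsπ _)
  have hS₂s : ∀ x m t, x ∈ A ∨ t = 0 → S₂ ((x, m), t) = s (x, m) := fun x m t h =>
    (hS₂C ((x, m), t) (h.elim (fun h => Or.inl (Or.inl h)) Or.inr)).trans (hf₂s x m t h)
  -- A cut-off function `χ`, equal to `1` on `B` and vanishing outside the interior of `L`.
  obtain ⟨χ, hχ0, hχ1, hχI⟩ := exists_continuous_zero_one_of_isCompact' hB
    (isOpen_interior (s := L)).isClosed_compl (Set.disjoint_left.2 fun m hm hm' => hm' (hBL hm))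
  let c : M → I := fun m => ⟨χ m, hχI m⟩
  have hc : Continuous c := χ.continuous.subtype_mk _
  have hc0 : ∀ m, m ∉ interior L → c m = 0 := fun m hm => Subtype.ext (hχ0 hm)
  have hc1 : ∀ m ∈ B, c m = 1 := fun m hm => Subtype.ext (hχ1 hm)
  let S : (I × X) × M → E := fun p =>
    if h : p.2 ∈ L then S₂ ((p.1.2, ⟨p.2, h⟩), min p.1.1 (c p.2)) else s (p.1.2, p.2)
  have hSL : ∀ t x, ∀ m : L, S ((t, x), m) = S₂ ((x, m), min t (c m)) := fun t x m => by
    simp only [S, m.2, dif_pos]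
  have hSs : ∀ t x m, x ∈ A ∨ t = 0 ∨ m ∉ interior L → S ((t, x), m) = s (x, m) := by
    intro t x m h
    by_cases hm : m ∈ L
    · refine (hSL t x ⟨m, hm⟩).trans (hS₂s _ _ _ ?_)
      rcases h with h | rfl | h
      · exact Or.inl h
      · exact Or.inr (min_eq_left unitInterval.nonneg')
      · rw [hc0 m h]
        exact Or.inr (min_eq_right unitInterval.nonneg')
    · simp only [S, hm, dif_neg, not_false_eq_true]
  have hSB : ∀ t x, ∀ b : B, S ((t, x), b) = η ((x, t), b) := by
    intro t x b
    have hb : (b : M) ∈ L := interior_subset (hBL b.2)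
    refine (hSL t x ⟨b, hb⟩).trans ?_
    rw [hc1 b b.2, min_eq_left unitInterval.le_one']
    exact (hS₂C ((x, ⟨b, hb⟩), t) (Or.inl (Or.inr b.2))).trans (hf₂B x t b)
  refine ⟨S, ?_, ?_, fun x m => hSs 0 x m (Or.inr (Or.inl rfl)),
    fun t x b hb => (hSB t x b).trans (hηΔ x t b hb), fun t x hx m => hSs t x m (Or.inl hx),
    fun x b => (hSB 1 x b).trans (hη1 x b)⟩
  · have hcov : (Set.univ : Set ((I × X) × M)) =
        {p | p.2 ∈ L} ∪ {p | p.2 ∈ (interior L)ᶜ} := by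
      ext p
      by_cases hp : p.2 ∈ interior L
      · simp [interior_subset hp]
      · simp [hp]
    rw [← continuousOn_univ, hcov]
    refine ContinuousOn.union_of_isClosed ?_ ?_ (hL.isClosed.preimage continuous_snd)
      (isOpen_interior.isClosed_compl.preimage continuous_snd)
    · rw [continuousOn_iff_continuous_domRestrict]
      have : Continuous fun p : {p : (I × X) × M | p.2 ∈ L} =>
          S₂ ((p.1.1.2, (⟨p.1.2, p.2⟩ : L)), min p.1.1.1 (c p.1.2)) :=
        hS₂.comp (Continuous.prodMk (by fun_prop) (by fun_prop))
      exact this.congr fun p => (hSL p.1.1.1 p.1.1.2 ⟨p.1.2, p.2⟩).symm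
    · refine ContinuousOn.congr (f := fun p : (I × X) × M => s (p.1.2, p.2)) ?_ ?_
      · exact Continuous.continuousOn (by fun_prop)
      · exact fun p hp => hSs p.1.1 p.1.2 p.2 (Or.inr (Or.inr hp))
  · rintro ⟨⟨t, x⟩, m⟩
    by_cases hm : m ∈ L
    · have h := hSL t x ⟨m, hm⟩
      exact (congrArg π h).trans (hS₂π _)
    · have h := hSs t x m (Or.inr (Or.inr fun h => hm (interior_subset h)))
      exact (congrArg π h).trans (hsπ _)

/-! ### The compression criterion for weak equivalences -/

/-- Every family in `Q` over a compact Hausdorff space `X`, with values in the image of `f` over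
`A`, can be deformed relative to `A` into a family that comes from `P`. -/
def Compresses {P Q : Type*} [TopologicalSpace P] [TopologicalSpace Q] (f : P → Q) : Prop :=
  ∀ (X : Type) [TopologicalSpace X] [CompactSpace X] [T2Space X] (A : Set X), NDRData A →
    ∀ p : C(X, Q), (∀ a ∈ A, p a ∈ Set.range f) →
      ∃ (H : C(I × X, Q)) (q : C(X, P)), (∀ x, H (0, x) = p x) ∧
        (∀ t, ∀ a ∈ A, H (t, a) = p a) ∧ ∀ x, H (1, x) = f (q x)

/-- Surjectivity on `π_n` compresses a cube relative to its boundary, injectivity compresses a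
homotopy, i.e. a cube of one dimension more. -/
lemma Compresses.isWeakHomotopyEquiv {P : Type u} {Q : Type v} [TopologicalSpace P]
    [TopologicalSpace Q] {f : P → Q} (hf : Continuous f) (hinj : Function.Injective f)
    (h : Compresses f) : IsWeakHomotopyEquiv f := by
  refine ⟨hf, ⟨?_, ?_⟩, fun n _ x => ⟨?_, ?_⟩⟩
  · rintro ⟨a⟩ ⟨b⟩ hab
    obtain ⟨p⟩ : Joined (f a) (f b) := Quotient.exact hab
    obtain ⟨H, q, -, h1, h2⟩ := h I {t | t = 0 ∨ t = 1} NDRData.interval p.toContinuousMap (by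
      rintro t (rfl | rfl)
      · exact ⟨a, p.source.symm⟩
      · exact ⟨b, p.target.symm⟩)
    refine Quotient.sound ⟨⟨q, hinj ?_, hinj ?_⟩⟩
    · exact ((h2 0).symm.trans (h1 1 0 (Or.inl rfl))).trans p.source
    · exact ((h2 1).symm.trans (h1 1 1 (Or.inr rfl))).trans p.target
  · rintro ⟨y⟩
    obtain ⟨H, q, h0, -, h2⟩ := h (Fin 0 → I) (Cube.boundary (Fin 0)) (NDRData.cube (Fin 0))
      (ContinuousMap.const _ y) (by rintro a ⟨i, -⟩; exact i.elim0)
    let x₀ : Fin 0 → I := fun _ => 0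
    refine ⟨Quotient.mk _ (q x₀), Quotient.sound (Joined.symm ⟨⟨⟨fun t => H (t, x₀), by fun_prop⟩,
      h0 x₀, h2 x₀⟩⟩)⟩
  · rintro ⟨p⟩ ⟨p'⟩ hpp
    obtain ⟨G⟩ : GenLoop.Homotopic (genLoopMap ⟨f, hf⟩ p) (genLoopMap ⟨f, hf⟩ p') :=
      Quotient.exact hpp
    have hG0 : ∀ y, G (0, y) = f (p.1 y) := fun y => G.apply_zero y
    have hG1 : ∀ y, G (1, y) = f (p'.1 y) := fun y => G.apply_one y
    have hGb : ∀ t, ∀ y ∈ Cube.boundary (Fin n), G (t, y) = f (p.1 y) := fun t y hy =>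
      G.eq_fst t hy
    obtain ⟨H, q, -, h1, h2⟩ := h (I × (Fin n → I)) _
      (NDRData.interval.prod (NDRData.cube (Fin n))) G.toContinuousMap (by
        rintro ⟨t, y⟩ ((ht | ht) | hy)
        · have ht' : t = 0 := ht
          subst ht'
          exact ⟨_, (hG0 y).symm⟩
        · have ht' : t = 1 := ht
          subst ht'
          exact ⟨_, (hG1 y).symm⟩
        · exact ⟨_, (hGb t y hy).symm⟩)
    have hq : ∀ z, (z.1 = 0 ∨ z.1 = 1) ∨ z.2 ∈ Cube.boundary (Fin n) → f (q z) = G z :=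
      fun z hz => (h2 z).symm.trans (h1 1 z hz)
    refine Quotient.sound ⟨⟨⟨q, fun y => hinj ?_, fun y => hinj ?_⟩, fun t y hy => hinj ?_⟩⟩
    · exact (hq (0, y) (Or.inl (Or.inl rfl))).trans (hG0 y)
    · exact (hq (1, y) (Or.inl (Or.inr rfl))).trans (hG1 y)
    · exact (hq (t, y) (Or.inr hy)).trans (hGb t y hy)
  · rintro ⟨p⟩
    have hpb : ∀ y ∈ Cube.boundary (Fin n), p.1 y = f x := fun y hy => p.2 y hy
    obtain ⟨H, q, h0, h1, h2⟩ := h (Fin n → I) _ (NDRData.cube (Fin n)) p.1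
      (fun y hy => ⟨x, (hpb y hy).symm⟩)
    refine ⟨Quotient.mk _ ⟨q, fun y hy => hinj ?_⟩, Quotient.sound (GenLoop.Homotopic.symm
      ⟨⟨⟨H, fun y => h0 y, fun y => h2 y⟩, fun t y hy => h1 t y hy⟩⟩)⟩
    exact ((h2 y).symm.trans (h1 1 y hy)).trans (hpb y hy)

/-! ### Fiber bundles -/

/-- Transport in a local trivialization `e` is `(m, y) ↦ e⁻¹ (m, pr₂ (e y))`. -/
lemma IsFiberBundle.hasTransport {E M F : Type u} [TopologicalSpace E] [TopologicalSpace M]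
    [TopologicalSpace F] {π : E → M} (h : IsFiberBundle F π) : HasTransport π := by
  classical
  refine ⟨h.continuous, fun x => ?_⟩
  obtain ⟨V, hV, hx, e, he⟩ := h.locTriv x
  have heπ : ∀ q : V × F, π (e.symm q) = q.1 := fun q => by
    rw [← he, e.apply_symm_apply]
  refine ⟨V, fun p => if hp : p.1 ∈ V ∧ π p.2 ∈ V then
    (e.symm (⟨p.1, hp.1⟩, (e ⟨p.2, hp.2⟩).2) : E) else p.2, hx, hV, ?_, ?_, ?_⟩
  · rw [continuousOn_iff_continuous_domRestrict]
    have : Continuous fun p : V ×ˢ (π ⁻¹' V) =>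
        (e.symm (⟨p.1.1, p.2.1⟩, (e ⟨p.1.2, p.2.2⟩).2) : E) := by
      have h1 : Continuous fun p : V ×ˢ (π ⁻¹' V) => (⟨p.1.2, p.2.2⟩ : π ⁻¹' V) := by fun_prop
      exact continuous_subtype_val.comp (e.symm.continuous.comp (Continuous.prodMk (by fun_prop)
        (continuous_snd.comp (e.continuous.comp h1))))
    refine this.congr fun p => ?_
    have hp : p.1.1 ∈ V ∧ π p.1.2 ∈ V := p.2
    simp only [Set.domRestrict_apply, hp, and_self, dif_pos]
  · intro m hm y hy
    simp only [hm, hy, and_self, dif_pos, heπ]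
  · intro y hy
    simp only [hy, and_self, dif_pos]
    have : ((⟨π y, hy⟩ : V), (e ⟨y, hy⟩).2) = e ⟨y, hy⟩ :=
      Prod.ext (Subtype.ext (he ⟨y, hy⟩).symm) rfl
    rw [this, e.symm_apply_apply]

/-- Let `M` be a manifold without boundary and `π : E → M` a fiber bundle with path-connected
fiber.  Let `Δ ⊆ B ⊆ M` with `Δ` and `B` compact and contractible and the inclusions
`Δ ↪ M`, `B ↪ M` closed cofibrations, and let `γ` be a section of `π` on a neighborhood `U`
of `B`.  Then the inclusion `Γ(E, B, γ) ↪ Γ(E, Δ, γ)` is a weak homotopy equivalence. -/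
theorem fixSet_incl_isWeakHomotopyEquiv {d : ℕ} {E M F : Type u}
    [TopologicalSpace E] [TopologicalSpace M] [TopologicalSpace F]
    [ChartedSpace (EuclideanSpace ℝ (Fin d)) M] [T2Space M] [PathConnectedSpace F]
    (π : E → M) (hπ : IsFiberBundle F π)
    (Δ B : Set M) (hΔB : Δ ⊆ B)
    (hΔc : IsCompact Δ) (hBc : IsCompact B)
    (hΔcon : ContractibleSpace Δ) (hBcon : ContractibleSpace B)
    (hΔcof : ClosedCofibration Δ) (hBcof : ClosedCofibration B)
    (U : Set M) (hU : IsOpen U) (hBU : B ⊆ U)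
    (γ : C(U, E)) (hγ : ∀ x : U, π (γ x) = ↑x) :
    IsWeakHomotopyEquiv (fun s : ↥(fixSet π γ B hBU) =>
      (⟨s.1, fun x hx => s.2 x (hΔB hx)⟩ : ↥(fixSet π γ Δ (hΔB.trans hBU)))) := by
  have : LocallyCompactSpace M := ChartedSpace.locallyCompactSpace (EuclideanSpace ℝ (Fin d)) M
  obtain ⟨flΔ⟩ := NDRData.nonempty_of_closedCofibration hΔcof
  obtain ⟨flB⟩ := NDRData.nonempty_of_closedCofibration hBcof
  refine Compresses.isWeakHomotopyEquiv (by fun_prop) ?_ ?_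
  · intro a b hab
    exact Subtype.ext (congrArg (fun s => s.1) hab)
  intro X _ _ _ A flA p hpA
  -- The adjoint of `p`, a family of sections over `X`.
  let p' : C(X, C(M, E)) := ⟨fun x => (p x).1.1, by fun_prop⟩
  obtain ⟨S, hS, hSπ, hS0, hSΔ, hSA, hS1⟩ := exists_compression hπ.hasTransport flA hΔB hBc flΔ flB
    (γ := fun b : B => γ ⟨b, hBU b.2⟩) (by fun_prop) (fun b => hγ _)
    (s := fun q => p' q.1 q.2) (ContinuousMap.continuous_uncurry_of_continuous p')
    (fun q => (p q.1).1.2 q.2) (fun x b hb => (p x).2 b hb) (by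
      intro x hx b
      obtain ⟨s, hs⟩ := hpA x hx
      have h1 : s.1 = (p x).1 := congrArg (fun w => w.1) hs
      have h2 := s.2 b b.2
      rw [h1] at h2
      exact h2)
  let S' : C(I × X, C(M, E)) := ContinuousMap.curry ⟨S, hS⟩
  have hS' : ∀ z m, S' z m = S (z, m) := fun _ _ => rfl
  have hS'π : ∀ z m, π (S' z m) = m := fun z m => hSπ (z, m)
  refine ⟨⟨fun z => ⟨⟨S' z, hS'π z⟩, fun m hm => hSΔ z.1 z.2 ⟨m, hΔB hm⟩ hm⟩, by fun_prop⟩,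
    ⟨fun x => ⟨⟨S' (1, x), hS'π _⟩, fun m hm => hS1 x ⟨m, hm⟩⟩, by fun_prop⟩, ?_, ?_, ?_⟩
  · intro x
    exact Subtype.ext (Subtype.ext (ContinuousMap.ext fun m => hS0 x m))
  · intro t a ha
    exact Subtype.ext (Subtype.ext (ContinuousMap.ext fun m => hSA t a ha m))
  · intro x
    rfl
end

section
/- Let X be a topological space and let Δ ⊆ B be compact Hausdorff spaces, both contractible. Then the restriction map C(B, X) → C(Δ, X), f ↦ f|_Δ, between spaces of continuous maps with the compact-open topology, is a homotopy equivalence; in particular it is a weak homotopy equivalence. -/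
/-!
Contractibility makes the inclusion `Δ → B` a homotopy equivalence, with inverse the constant map
`B → Δ` at any point of `Δ`. Precomposition `φ ↦ φ ∘ u` depends on `u` continuously when the middle
space is locally compact, so it turns homotopies into homotopies (`precomp_homotopic`) and the
restriction map is a homotopy equivalence.

That a homotopy equivalence is a weak one (`isWeakHomotopyEquiv_of_homotopyInverse`) needs care with
basepoints, since the homotopies move them. It reduces to showing that a self-map `h` homotopic to
the identity is bijective on homotopy groups. The homotopy is a free homotopy from a loop `p` to
`h ∘ p` which drags the boundary of the cube along a path `γ`. An explicit transport of loops along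
`γ` (`transport`: shrink the loop to the concentric half-size cube and run `γ` radially in the
remaining shell) represents every such free homotopy up to homotopy rel boundary
(`FreeHomotopic.transport_homotopic`), and transport along `γ.symm` inverts transport along `γ`.
-/

open scoped unitInterval Topology

universe u v w

/-- The restriction map `C(B, X) → C(Δ, X)`, as a continuous map between mapping spaces
with the compact-open topology. -/
def restrictionMap {B X : Type u} [TopologicalSpace B] [TopologicalSpace X] (Δ : Set B) :
    C(C(B, X), C(↥Δ, X)) :=
  ⟨fun f => f.restrict Δ, ContinuousMap.continuous_restrict Δ⟩

/-! ### Radial geometry of the cube -/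

section Cube

variable {N : Type}

/-- Dilation of the cube by the factor `c` about its centre, clamped coordinatewise to the cube. -/
noncomputable def cubeDilate (c : ℝ) (z : I^N) : I^N :=
  fun i => Set.projIcc 0 1 zero_le_one ((1 + c * (2 * (z i : ℝ) - 1)) / 2)

@[fun_prop]
theorem Continuous.cubeDilate {A : Type*} [TopologicalSpace A] {c : A → ℝ} {z : A → I^N}
    (hc : Continuous c) (hz : Continuous z) : Continuous fun a => cubeDilate (c a) (z a) := by
  unfold _root_.cubeDilate
  refine continuous_pi fun i => continuous_projIcc.comp ?_
  fun_prop

theorem cubeDilate_one (z : I^N) : cubeDilate 1 z = z := by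
  funext i
  have : (1 + 1 * (2 * (z i : ℝ) - 1)) / 2 = z i := by ring
  simp only [cubeDilate, this, Set.projIcc_val]

variable [Fintype N]

/-- The sup-distance of a point of the cube `[0,1]^N` from its centre, normalized to be `1` on the
boundary. -/
noncomputable def cubeRadius (z : I^N) : ℝ := ‖(fun i => 2 * (z i : ℝ) - 1 : N → ℝ)‖

@[fun_prop]
theorem continuous_cubeRadius : Continuous (cubeRadius : (I^N) → ℝ) := by
  unfold cubeRadius; fun_prop

theorem cubeRadius_le_one (z : I^N) : cubeRadius z ≤ 1 := by
  refine (pi_norm_le_iff_of_nonneg zero_le_one).2 fun i => ?_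
  rw [Real.norm_eq_abs, abs_le]
  constructor <;> linarith [(z i).2.1, (z i).2.2]

theorem cubeRadius_of_mem_boundary {z : I^N} (hz : z ∈ Cube.boundary N) : cubeRadius z = 1 := by
  refine le_antisymm (cubeRadius_le_one z) ?_
  obtain ⟨i, hi⟩ := hz
  refine le_trans ?_ (norm_le_pi_norm (fun i => 2 * (z i : ℝ) - 1 : N → ℝ) i)
  rcases hi with h | h <;> norm_num [h]

/-- Points that the dilation pushes out of the cube are clamped to its boundary. -/
theorem cubeDilate_mem_boundary {c : ℝ} (hc : 0 < c) {z : I^N} (h : 1 ≤ c * cubeRadius z) :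
    cubeDilate c z ∈ Cube.boundary N := by
  by_contra hb
  have key : cubeRadius z < 1 / c := by
    refine (pi_norm_lt_iff (by positivity)).2 fun i => ?_
    by_contra! hi
    refine hb ⟨i, ?_⟩
    rw [div_le_iff₀ hc, Real.norm_eq_abs] at hi
    rcases abs_cases (2 * (z i : ℝ) - 1) with ⟨h1, _⟩ | ⟨h1, _⟩
    · right
      exact Set.projIcc_of_right_le _ (by rw [h1] at hi; linarith)
    · left
      exact Set.projIcc_of_le_left _ (by rw [h1] at hi; linarith)
  rw [lt_div_iff₀ hc] at key
  linarith

end Cube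

/-! ### Transport of generalized loops along a path of basepoints -/

section Transport

variable {N : Type} {X : Type u} [TopologicalSpace X] {x y : X}

/-- `FreeHomotopic γ p q`: the loops `p` and `q` are homotopic through maps of the cube which at
time `t` send the whole boundary to `γ t`. -/
def FreeHomotopic (γ : Path x y) (p : GenLoop N X x) (q : GenLoop N X y) : Prop :=
  ∃ F : C(I × (I^N), X), (∀ z, F (0, z) = p z) ∧ (∀ z, F (1, z) = q z) ∧
    ∀ t, ∀ z ∈ Cube.boundary N, F (t, z) = γ t

theorem FreeHomotopic.symm {γ : Path x y} {p : GenLoop N X x} {q : GenLoop N X y}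
    (h : FreeHomotopic γ p q) : FreeHomotopic γ.symm q p := by
  obtain ⟨F, h0, h1, hb⟩ := h
  refine ⟨F.comp ⟨fun a => (unitInterval.symm a.1, a.2), by fun_prop⟩, ?_, ?_, ?_⟩
  · intro z; simpa using h1 z
  · intro z; simpa using h0 z
  · intro t z hz; simpa using hb _ z hz

variable [Fintype N]

/-- The gluing that underlies `transport`: a map `P` of the cube sending the boundary to `x`, shrunk
by the factor `c`, with `γ` run radially outside. -/
noncomputable def shell (γ : Path x y) (P : (I^N) → X) (c : ℝ) (z : I^N) : X :=
  open Classical in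
  if c * cubeRadius z ≤ 1 then P (cubeDilate c z) else γ.extend (c * cubeRadius z - 1)

theorem shell_of_le (γ : Path x y) (P : (I^N) → X) {c : ℝ} {z : I^N}
    (h : c * cubeRadius z ≤ 1) : shell γ P c z = P (cubeDilate c z) := if_pos h

theorem shell_of_ge (γ : Path x y) {P : (I^N) → X} (hP : ∀ w ∈ Cube.boundary N, P w = x)
    {c : ℝ} (hc : 0 < c) {z : I^N} (h : 1 ≤ c * cubeRadius z) :
    shell γ P c z = γ.extend (c * cubeRadius z - 1) := by
  rcases h.eq_or_lt with h' | h'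
  · rw [shell_of_le γ P h'.ge, hP _ (cubeDilate_mem_boundary hc h), ← h']
    simp
  · exact if_neg (not_le.2 h')

theorem shell_one (γ : Path x y) (P : (I^N) → X) (z : I^N) : shell γ P 1 z = P z := by
  rw [shell_of_le γ P (by linarith [cubeRadius_le_one z]), cubeDilate_one]

theorem shell_of_mem_boundary (γ : Path x y) {P : (I^N) → X}
    (hP : ∀ w ∈ Cube.boundary N, P w = x) {c : ℝ} (hc : 1 ≤ c) {z : I^N}
    (hz : z ∈ Cube.boundary N) : shell γ P c z = γ.extend (c - 1) := by
  have h := cubeRadius_of_mem_boundary hz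
  rw [shell_of_ge γ hP (by linarith) (by rw [h]; linarith), h, mul_one]

theorem continuous_shell {A : Type*} [TopologicalSpace A] (γ : Path x y) {P : A → (I^N) → X}
    (hPc : Continuous fun b : A × (I^N) => P b.1 b.2) (hP : ∀ a, ∀ w ∈ Cube.boundary N, P a w = x)
    {c : A → ℝ} (hc : Continuous c) (hc0 : ∀ a, 0 < c a) {z : A → I^N} (hz : Continuous z) :
    Continuous fun a => shell γ (P a) (c a) (z a) := by
  unfold shell
  refine Continuous.if_le ?_ ?_ (by fun_prop) continuous_const ?_
  · exact hPc.comp (continuous_id.prodMk (hc.cubeDilate hz))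
  · exact γ.continuous_extend.comp (by fun_prop)
  · intro a ha
    rw [hP _ _ (cubeDilate_mem_boundary (hc0 _) ha.ge), ha]
    simp

/-- Transport of a generalized loop along a path `γ` of basepoints: the loop on the concentric cube
of half size, and `γ` run radially in the remaining shell. -/
noncomputable def transport (γ : Path x y) (p : GenLoop N X x) : GenLoop N X y :=
  ⟨⟨fun z => shell γ p 2 z, continuous_shell γ (P := fun _ => p) (c := fun _ => 2)
      (p.1.continuous.comp continuous_snd) (fun _ => GenLoop.boundary p) continuous_const
      (fun _ => two_pos) continuous_id⟩,
    fun z hz => by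
      change shell γ p 2 z = y
      rw [shell_of_mem_boundary γ (GenLoop.boundary p) one_le_two hz]
      norm_num⟩

/-- The dilation factor grows from `1` to `2`, so that at time `t` the boundary sits at `γ t`. -/
theorem freeHomotopic_transport (γ : Path x y) (p : GenLoop N X x) :
    FreeHomotopic γ p (transport γ p) := by
  refine ⟨⟨fun a => shell γ p (1 + (a.1 : ℝ)) a.2, continuous_shell γ (P := fun _ => p)
    (c := fun a : I × (I^N) => 1 + (a.1 : ℝ)) (p.1.continuous.comp continuous_snd)
    (fun _ => GenLoop.boundary p) (by fun_prop) (fun a => by linarith [a.1.2.1])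
    continuous_snd⟩, ?_, ?_, ?_⟩
  · intro z
    change shell γ p (1 + ((0 : I) : ℝ)) z = p z
    rw [Set.Icc.coe_zero, add_zero, shell_one]
  · intro z
    change shell γ p (1 + ((1 : I) : ℝ)) z = shell γ p 2 z
    norm_num
  · intro t z hz
    change shell γ p (1 + (t : ℝ)) z = γ t
    rw [shell_of_mem_boundary γ (GenLoop.boundary p) (by linarith [t.2.1]) hz, add_sub_cancel_left,
      Path.extend_extends']

theorem transport_congr (γ : Path x y) {p p' : GenLoop N X x} (h : GenLoop.Homotopic p p') :
    GenLoop.Homotopic (transport γ p) (transport γ p') := by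
  obtain ⟨L⟩ := h
  have hL : ∀ s, ∀ w ∈ Cube.boundary N, L (s, w) = x := fun s w hw =>
    (L.eq_fst s hw).trans (p.2 w hw)
  refine ⟨{
    toFun := fun a => shell γ (fun z => L (a.1, z)) 2 a.2
    continuous_toFun := continuous_shell γ (P := fun (a : I × (I^N)) z => L (a.1, z))
      (c := fun _ => 2) (L.continuous.comp (by fun_prop)) (fun a => hL a.1) continuous_const
      (fun _ => two_pos) continuous_snd
    map_zero_left := fun z => ?_
    map_one_left := fun z => ?_
    prop' := fun s z hz => ?_ }⟩
  · change _ = shell γ p 2 z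
    simp only [L.apply_zero]; rfl
  · change _ = shell γ p' 2 z
    simp only [L.apply_one]; rfl
  · change shell γ (fun z => L (s, z)) 2 z = shell γ p 2 z
    rw [shell_of_mem_boundary γ (hL s) one_le_two hz,
      shell_of_mem_boundary γ (GenLoop.boundary p) one_le_two hz]

/-- A free homotopy along `γ` ends, up to homotopy rel boundary, in the transport along `γ`. At
time `s` the homotopy shows the stage `s` of the free homotopy on a concentric cube of size
`1 / (2 - s)`, and the part of `γ` from `s` to `1` in the shell around it. -/
theorem FreeHomotopic.transport_homotopic {γ : Path x y} {p : GenLoop N X x} {q : GenLoop N X y}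
    (h : FreeHomotopic γ p q) : GenLoop.Homotopic (transport γ p) q := by
  obtain ⟨F, h0, h1, hb⟩ := h
  -- On the shell the clamped dilation lands in the boundary, where `F` only depends on time, so
  -- one composite formula covers both the inner cube and the shell.
  have hcont : Continuous fun a : I × (I^N) =>
      F (Set.projIcc 0 1 zero_le_one
          ((a.1 : ℝ) + max 0 ((2 - (a.1 : ℝ)) * cubeRadius a.2 - 1)),
        cubeDilate (2 - (a.1 : ℝ)) a.2) := by
    refine F.continuous.comp ((continuous_projIcc.comp ?_).prodMk ?_) <;> fun_prop
  refine ⟨{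
    toFun := _
    continuous_toFun := hcont
    map_zero_left := fun z => ?_
    map_one_left := fun z => ?_
    prop' := fun s z hz => ?_ }⟩
  · change _ = shell γ p 2 z
    simp only [Set.Icc.coe_zero, zero_add, sub_zero]
    rcases le_total (2 * cubeRadius z) 1 with hz | hz
    · rw [shell_of_le γ _ hz, max_eq_left (by linarith), Set.projIcc_left]
      exact h0 _
    · rw [shell_of_ge γ (GenLoop.boundary p) two_pos hz, max_eq_right (by linarith),
        hb _ _ (cubeDilate_mem_boundary two_pos hz)]
      rfl
  · change _ = q z
    have e : (2 : ℝ) - 1 = 1 := by norm_num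
    simp only [Set.Icc.coe_one, e]
    rw [cubeDilate_one, max_eq_left (by linarith [cubeRadius_le_one z]), add_zero,
      Set.projIcc_right]
    exact h1 z
  · have hs := s.2.2
    have hr := cubeRadius_of_mem_boundary hz
    change F _ = (transport γ p) z
    rw [GenLoop.boundary (transport γ p) z hz]
    simp only [hr]
    rw [hb _ _ (cubeDilate_mem_boundary (by linarith) (by rw [hr]; linarith)),
      max_eq_right (by linarith)]
    have e : (s : ℝ) + ((2 - (s : ℝ)) * 1 - 1) = 1 := by ring
    rw [e, Set.projIcc_right]
    exact γ.target

theorem transport_symm_transport (γ : Path x y) (p : GenLoop N X x) :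
    GenLoop.Homotopic (transport γ.symm (transport γ p)) p :=
  (freeHomotopic_transport γ p).symm.transport_homotopic

end Transport

/-! ### Homotopy equivalences are weak homotopy equivalences -/

section WeakEquiv

variable {X : Type u} {Y : Type v} [TopologicalSpace X] [TopologicalSpace Y]

/-- A self-map homotopic to the identity acts on homotopy groups as a transport along the track of
the basepoint, hence bijectively. -/
theorem piMap_bijective_of_homotopic_id {n : ℕ} {h : C(X, X)}
    (hh : h.Homotopic (ContinuousMap.id X)) (x : X) : Function.Bijective (piMap n h x) := by
  obtain ⟨H⟩ := hh.symm
  let γ : Path x (h x) := H.evalAt x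
  have hfree : ∀ p : GenLoop (Fin n) X x, FreeHomotopic γ p (genLoopMap h p) := fun p =>
    ⟨⟨fun a => H (a.1, p a.2), H.continuous.comp
        (continuous_fst.prodMk (p.1.continuous.comp continuous_snd))⟩,
      fun z => H.apply_zero _, fun z => H.apply_one _, fun t z hz => by
        change H (t, p.1 z) = H (t, x)
        rw [p.2 z hz]⟩
  constructor
  · intro a b
    induction a using Quotient.inductionOn with | _ p
    induction b using Quotient.inductionOn with | _ p'
    intro hab
    have hab' : GenLoop.Homotopic (genLoopMap h p) (genLoopMap h p') := Quotient.exact hab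
    have h1 : GenLoop.Homotopic (transport γ p) (transport γ p') :=
      ((hfree p).transport_homotopic.trans hab').trans (hfree p').transport_homotopic.symm
    exact Quotient.sound (((transport_symm_transport γ p).symm.trans
      (transport_congr γ.symm h1)).trans (transport_symm_transport γ p'))
  · intro b
    induction b using Quotient.inductionOn with | _ q
    refine ⟨Quotient.mk _ (transport γ.symm q), Quotient.sound ?_⟩
    have h1 := transport_symm_transport γ.symm q
    rw [Path.symm_symm] at h1
    exact (hfree _).transport_homotopic.symm.trans h1

theorem piMap_comp (n : ℕ) (g : C(Y, X)) (f : C(X, Y)) (x : X) :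
    piMap n (g.comp f) x = piMap n g (f x) ∘ piMap n f x := by
  funext a
  induction a using Quotient.inductionOn with | _ p
  rfl

theorem pi0Map_comp_of_homotopic_id {g : C(Y, X)} {f : C(X, Y)}
    (h : (g.comp f).Homotopic (ContinuousMap.id X)) :
    Function.LeftInverse (pi0Map g) (pi0Map f) := by
  obtain ⟨H⟩ := h
  intro a
  induction a using Quotient.inductionOn with | _ x
  exact Quotient.sound ⟨H.evalAt x⟩

theorem isWeakHomotopyEquiv_of_homotopyInverse {f : C(X, Y)} {g : C(Y, X)}
    (hgf : (g.comp f).Homotopic (ContinuousMap.id X))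
    (hfg : (f.comp g).Homotopic (ContinuousMap.id Y)) : IsWeakHomotopyEquiv f := by
  refine ⟨f.continuous, ⟨(pi0Map_comp_of_homotopic_id hgf).injective,
    (pi0Map_comp_of_homotopic_id hfg).surjective⟩, fun n _ x => ?_⟩
  change Function.Bijective (piMap n f x)
  have h1 : Function.Bijective (piMap n g (f x) ∘ piMap n f x) :=
    piMap_comp n g f x ▸ piMap_bijective_of_homotopic_id hgf x
  have h2 : Function.Bijective (piMap n f (g (f x)) ∘ piMap n g (f x)) :=
    piMap_comp n f g (f x) ▸ piMap_bijective_of_homotopic_id hfg (f x)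
  have hg : Function.Bijective (piMap n g (f x)) := ⟨h2.1.of_comp, h1.2.of_comp⟩
  exact (hg.of_comp_iff' _).1 h1

end WeakEquiv

/-! ### Mapping spaces out of contractible spaces -/

/-- Precomposition turns homotopic maps into homotopic maps of mapping spaces. Local compactness
makes composition of maps jointly continuous. -/
theorem precomp_homotopic {A : Type u} {A' : Type v} {X : Type w} [TopologicalSpace A]
    [TopologicalSpace A'] [TopologicalSpace X] [LocallyCompactSpace A'] {k l : C(A, A')}
    (h : k.Homotopic l) :
    (k.compRightContinuousMap X).Homotopic (l.compRightContinuousMap X) := by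
  obtain ⟨H⟩ := h
  refine ⟨{
    toFun := fun a => a.2.comp (H.curry a.1)
    continuous_toFun := Continuous.compCM continuous_snd (H.curry.continuous.comp continuous_fst)
    map_zero_left := fun φ => ?_
    map_one_left := fun φ => ?_ }⟩
  · ext a
    exact congrArg φ (H.apply_zero a)
  · ext a
    exact congrArg φ (H.apply_one a)

theorem const_homotopic_id {A : Type u} [TopologicalSpace A] [ContractibleSpace A] (a : A) :
    (ContinuousMap.const A a).Homotopic (ContinuousMap.id A) := by
  obtain ⟨b, hb⟩ := id_nullhomotopic A
  have hab : (ContinuousMap.const A a).Homotopic (ContinuousMap.const A b) :=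
    hb.comp (ContinuousMap.Homotopic.refl (ContinuousMap.const A a))
  exact hab.trans hb.symm

/-- Let `X` be a topological space and `Δ ⊆ B` compact Hausdorff spaces, both contractible.
Then the restriction map `C(B, X) → C(Δ, X)`, `f ↦ f|_Δ`, is a homotopy equivalence; in
particular it is a weak homotopy equivalence. -/
theorem restrictionMap_homotopyEquiv {B X : Type u} [TopologicalSpace B] [TopologicalSpace X]
    [CompactSpace B] [T2Space B] [ContractibleSpace B]
    (Δ : Set B) (hΔc : IsCompact Δ) (hΔcon : ContractibleSpace Δ) :
    (∃ g : C(C(↥Δ, X), C(B, X)),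
        ((restrictionMap Δ).comp g).Homotopic (ContinuousMap.id _) ∧
        (g.comp (restrictionMap Δ)).Homotopic (ContinuousMap.id _)) ∧
      IsWeakHomotopyEquiv (restrictionMap (X := X) Δ) := by
  have : CompactSpace Δ := isCompact_iff_compactSpace.1 hΔc
  obtain ⟨d⟩ : Nonempty Δ := inferInstance
  -- The inverse precomposes with the constant map `B → Δ` at `d`.
  let g : C(C(↥Δ, X), C(B, X)) := (ContinuousMap.const B d).compRightContinuousMap X
  have h1 : ((restrictionMap Δ).comp g).Homotopic (ContinuousMap.id _) :=
    precomp_homotopic (X := X) (const_homotopic_id d)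
  have h2 : (g.comp (restrictionMap Δ)).Homotopic (ContinuousMap.id _) :=
    precomp_homotopic (X := X) (const_homotopic_id (d : B))
  exact ⟨⟨g, h1, h2⟩, isWeakHomotopyEquiv_of_homotopyInverse h2 h1⟩
end

section
/- Let A ↪ X and B ↪ Y be closed cofibrations of topological spaces. Then A × B ↪ X × Y is a closed cofibration. In particular, given a continuous map g_0 : X × Y → Z and a homotopy h : A × B × [0,1] → Z with h(a, b, 0) = g_0(a, b) for all (a,b) ∈ A × B, there exists a homotopy G : X × Y × [0,1] → Z with G(x, y, 0) = g_0(x, y) whose restriction to A × B × [0,1] equals h. -/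
/-!
The homotopy extension property for a closed `A ⊆ X` amounts to a retraction of the cylinder
`X × [0,1]` onto `S = X × {0} ∪ A × [0,1]`
(`ClosedCofibration.exists_retraction`): apply the property to the space `S` itself.
Taking the product of this retraction with the identity of an arbitrary space `W` shows that
`A × W ↪ X × W` has the homotopy extension property (`ClosedCofibration.extend_prod`); this uses
that maps on `S × W` can be glued from the two closed pieces.
The inclusion `A × B ↪ X × Y` then factors as `A × B ↪ X × B ↪ X × Y`, and a homotopy is extended
along the two factors one after the other.
-/

open scoped unitInterval Topology

universe u v w
/-- The subspace `X × {0} ∪ A × [0,1]` of the cylinder `X × [0,1]`. -/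
def cylinderBase {X : Type u} (A : Set X) : Set (X × unitInterval) :=
  {p | p.2 = 0 ∨ p.1 ∈ A}

theorem ClosedCofibration.exists_retraction {X : Type u} [TopologicalSpace X] {A : Set X}
    (hA : ClosedCofibration A) :
    ∃ r : C(X × unitInterval, cylinderBase A),
      (∀ x : X, (r (x, 0) : X × unitInterval) = (x, 0)) ∧
        ∀ (a : A) (t : unitInterval), (r (↑a, t) : X × unitInterval) = (↑a, t) := by
  obtain ⟨r, h0, h1⟩ := hA.2 (cylinderBase A)
    ⟨fun x => ⟨(x, 0), Or.inl rfl⟩, by fun_prop⟩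
    ⟨fun p => ⟨(↑p.1, p.2), Or.inr p.1.2⟩, by fun_prop⟩ (fun a => rfl)
  exact ⟨r, fun x => by rw [h0]; rfl, fun a t => by rw [h1]; rfl⟩

/-- The homotopy extension property of `A × W ↪ X × W`, for an arbitrary space `W`. -/
theorem ClosedCofibration.extend_prod {X : Type u} {W : Type v} {Z : Type w}
    [TopologicalSpace X] [TopologicalSpace W] [TopologicalSpace Z] {A : Set X}
    (hA : ClosedCofibration A) (f : C(X × W, Z)) (h : C((A × W) × unitInterval, Z))
    (hf : ∀ (a : A) (y : W), h ((a, y), 0) = f (↑a, y)) :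
    ∃ H : C((X × W) × unitInterval, Z),
      (∀ (x : X) (y : W), H ((x, y), 0) = f (x, y)) ∧
        ∀ (a : A) (y : W) (t : unitInterval), H ((↑a, y), t) = h ((a, y), t) := by
  classical
  obtain ⟨r, h0, h1⟩ := hA.exists_retraction
  -- `f` and `h` glued along `A × {0} × W`
  let k : cylinderBase A × W → Z := fun p =>
    if ha : p.1.1.1 ∈ A then h ((⟨p.1.1.1, ha⟩, p.2), p.1.1.2) else f (p.1.1.1, p.2)
  have k0 : ∀ p : cylinderBase A × W, p.1.1.2 = 0 → k p = f (p.1.1.1, p.2) := by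
    intro p hp
    by_cases ha : p.1.1.1 ∈ A
    · simp only [k, dif_pos ha, hp, hf]
    · simp only [k, dif_neg ha]
  have k1 : ∀ (p : cylinderBase A × W) (ha : p.1.1.1 ∈ A),
      k p = h ((⟨p.1.1.1, ha⟩, p.2), p.1.1.2) := fun p ha => by simp only [k, dif_pos ha]
  have hk : Continuous k := by
    let C₀ : Set (cylinderBase A × W) := {p | p.1.1.2 = 0}
    let C₁ : Set (cylinderBase A × W) := {p | p.1.1.1 ∈ A}
    have hC₀ : IsClosed C₀ := isClosed_eq (by fun_prop) continuous_const
    have hC₁ : IsClosed C₁ := hA.1.preimage (by fun_prop)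
    have hcov : C₀ ∪ C₁ = Set.univ := Set.eq_univ_of_forall fun p => p.1.2
    rw [← continuousOn_univ, ← hcov]
    refine ContinuousOn.union_of_isClosed ?_ ?_ hC₀ hC₁
    · refine ContinuousOn.congr (f := fun p => f (p.1.1.1, p.2)) ?_ fun p hp => k0 p hp
      exact Continuous.continuousOn (by fun_prop)
    · rw [continuousOn_iff_continuous_domRestrict]
      have : C₁.domRestrict k =
          fun p : C₁ => h ((⟨p.1.1.1.1, p.2⟩, p.1.2), p.1.1.1.2) :=
        funext fun p => k1 p.1 p.2
      rw [this]
      fun_prop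
  refine ⟨⟨fun q => k (r (q.1.1, q.2), q.1.2), by fun_prop⟩, fun x y => ?_, fun a y t => ?_⟩
  · change k (r (x, 0), y) = _
    rw [k0 _ (by simp [h0])]
    simp [h0]
  · change k (r (↑a, t), y) = _
    rw [k1 _ (by simp [h1])]
    simp [h1]

/-- Let `A ↪ X` and `B ↪ Y` be closed cofibrations.  Then `A × B ↪ X × Y` is a closed
cofibration.  In particular, any map `g₀ : X × Y → Z` together with a homotopy
`h : A × B × [0,1] → Z` starting at the restriction of `g₀` extends to a homotopy
`G : X × Y × [0,1] → Z` starting at `g₀` and restricting to `h` on `A × B × [0,1]`. -/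
theorem closedCofibration_prod {X Y : Type u} [TopologicalSpace X] [TopologicalSpace Y]
    (A : Set X) (B : Set Y) (hA : ClosedCofibration A) (hB : ClosedCofibration B) :
    ClosedCofibration (A ×ˢ B) ∧
      ∀ (Z : Type u) [TopologicalSpace Z] (g₀ : C(X × Y, Z))
        (h : C((↥A × ↥B) × unitInterval, Z)),
        (∀ (a : A) (b : B), h ((a, b), 0) = g₀ (↑a, ↑b)) →
        ∃ G : C((X × Y) × unitInterval, Z),
          (∀ (x : X) (y : Y), G ((x, y), 0) = g₀ (x, y)) ∧
          ∀ (a : A) (b : B) (t : unitInterval), G ((↑a, ↑b), t) = h ((a, b), t) := by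
  have key : ∀ (Z : Type u) [TopologicalSpace Z] (g₀ : C(X × Y, Z))
        (h : C((↥A × ↥B) × unitInterval, Z)),
        (∀ (a : A) (b : B), h ((a, b), 0) = g₀ (↑a, ↑b)) →
        ∃ G : C((X × Y) × unitInterval, Z),
          (∀ (x : X) (y : Y), G ((x, y), 0) = g₀ (x, y)) ∧
          ∀ (a : A) (b : B) (t : unitInterval), G ((↑a, ↑b), t) = h ((a, b), t) := by
    intro Z _ g₀ h hg
    -- extension along `A × B ↪ X × B`
    obtain ⟨H, H0, H1⟩ := hA.extend_prod (W := B)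
      ⟨fun p => g₀ (p.1, ↑p.2), by fun_prop⟩ h hg
    -- extension along `B × X ↪ Y × X`
    obtain ⟨G, G0, G1⟩ := hB.extend_prod (W := X)
      ⟨fun p => g₀ (p.2, p.1), by fun_prop⟩
      ⟨fun p => H ((p.1.2, p.1.1), p.2), by fun_prop⟩ (fun b x => H0 x b)
    exact ⟨⟨fun p => G ((p.1.2, p.1.1), p.2), by fun_prop⟩, fun x y => G0 y x,
      fun a b t => (G1 b a t).trans (H1 a b t)⟩
  refine ⟨⟨hA.1.prod hB.1, fun Z _ f h hf => ?_⟩, key⟩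
  obtain ⟨G, G0, G1⟩ := key Z f
    ⟨fun p => h (⟨(↑p.1.1, ↑p.1.2), p.1.1.2, p.1.2.2⟩, p.2), by fun_prop⟩
    (fun a b => hf ⟨(↑a, ↑b), a.2, b.2⟩)
  exact ⟨G, fun x => G0 x.1 x.2, fun a t => G1 ⟨a.1.1, a.2.1⟩ ⟨a.1.2, a.2.2⟩ t⟩
end
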